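/- arXiv:2305.09966 — 2 statements merged into one kernel-verified Lean document; each statement's English description precedes it below -/
import Mathlib

section
/- Let A be an alternating weak Büchi automaton (AWA) over alphabet Σ with state set Q, and let Â be its dual AWA. Then for every state q ∈ Q, L(A^q) = Σ^ω ∖ L(Â^q). -/
/-!
The two languages are disjoint because a run DAG of `A^q` and a run DAG of `Â^q` over the same word
share an ω-branch: a set satisfying `θ` and a set satisfying the dual of `θ` always meet in a state
occurring in `θ` (`PosBool.exists_mem_of_sat_dual`). The shared branch follows the underlying graph,
so by finiteness it is eventually trapped in one SCC. If both run DAGs were accepting, this SCC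
would contain accepting and rejecting states, contradicting weakness (`ABA.not_accepts_both`).

The languages cover `Σ^ω` by positional determinacy of the acceptance game, which holds for every
ABA with finitely many states. Winning positional strategies are represented by *ranked sets* of
positions: the rank of a position bounds the time until the next accepting state, so a ranked set
yields an accepting run DAG (`ABA.Ranked.accepts`). Ranked sets are closed under unions, taking
minima of ranks (`ABA.win_ranked`), so there is a largest one, `ABA.Win`. On its complement, the
dual automaton can stay in the complement (`ABA.not_sat_win`), and from each accepting state
there it can force a visit to a rejecting state in boundedly many steps (`ABA.exists_force`), since
otherwise the positions where it cannot do so could be added to `Win`. Hence the complement of `Win`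
is a ranked set for the dual automaton.
-/

universe u v

/-- Positive Boolean formulas over `Q` (with constants tt and ff, connectives ∧ and ∨). -/
inductive PosBool (Q : Type u) : Type u
  | tt : PosBool Q
  | ff : PosBool Q
  | var : Q → PosBool Q
  | band : PosBool Q → PosBool Q → PosBool Q
  | bor : PosBool Q → PosBool Q → PosBool Q

namespace PosBool

variable {Q : Type u}

/-- A set `Y` satisfies a positive Boolean formula. -/
def Sat (Y : Set Q) : PosBool Q → Prop
  | .tt => True
  | .ff => False
  | .var q => q ∈ Y
  | .band θ₁ θ₂ => Sat Y θ₁ ∧ Sat Y θ₂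
  | .bor θ₁ θ₂ => Sat Y θ₁ ∨ Sat Y θ₂

/-- The states occurring in a formula. -/
def vars : PosBool Q → Set Q
  | .tt => ∅
  | .ff => ∅
  | .var q => {q}
  | .band θ₁ θ₂ => vars θ₁ ∪ vars θ₂
  | .bor θ₁ θ₂ => vars θ₁ ∪ vars θ₂

/-- The dual formula: exchange tt with ff and ∧ with ∨. -/
def dual : PosBool Q → PosBool Q
  | .tt => .ff
  | .ff => .tt
  | .var q => .var q
  | .band θ₁ θ₂ => .bor (dual θ₁) (dual θ₂)
  | .bor θ₁ θ₂ => .band (dual θ₁) (dual θ₂)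

end PosBool

/-- An alternating Büchi automaton with alphabet `α` and state space `Q`. -/
structure ABA (α : Type v) (Q : Type u) where
  init : Q
  delta : Q → α → PosBool Q
  acc : Set Q

namespace ABA

variable {α : Type v} {Q : Type u}

/-- The automaton `A^q`, i.e. `A` with initial state `q`. -/
def setInit (M : ABA α Q) (q : Q) : ABA α Q := { M with init := q }

/-- Completeness: every transition formula is satisfiable. -/
def Complete (M : ABA α Q) : Prop := ∀ q a, PosBool.Sat (Set.univ : Set Q) (M.delta q a)

/-- Edge of the underlying graph. -/
def edge (M : ABA α Q) (q q' : Q) : Prop := ∃ a, q' ∈ PosBool.vars (M.delta q a)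

/-- Reachability in the underlying graph. -/
def reach (M : ABA α Q) : Q → Q → Prop := Relation.ReflTransGen M.edge

/-- The strongly connected component of a state. -/
def sccOf (M : ABA α Q) (q : Q) : Set Q := {q' | M.reach q q' ∧ M.reach q' q}

/-- `C` is an SCC of the underlying graph. -/
def IsSCC (M : ABA α Q) (C : Set Q) : Prop := ∃ q, C = M.sccOf q

/-- A weak alternating automaton: every SCC is accepting or rejecting. -/
def IsWeak (M : ABA α Q) : Prop := ∀ q : Q, M.sccOf q ⊆ M.acc ∨ M.sccOf q ∩ M.acc = ∅

/-- The dual automaton. -/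
def dual (M : ABA α Q) : ABA α Q where
  init := M.init
  delta := fun q a => (M.delta q a).dual
  acc := M.accᶜ

/-- A run DAG of `M` over the ω-word `w`. -/
structure RunDAG (M : ABA α Q) (w : ℕ → α) where
  V : ℕ → Set Q
  E : ℕ → Q → Q → Prop
  init_mem : M.init ∈ V 0
  edge_src : ∀ ℓ q q', E ℓ q q' → q ∈ V ℓ
  edge_tgt : ∀ ℓ q q', E ℓ q q' → q' ∈ V (ℓ + 1)
  sat : ∀ ℓ q, q ∈ V ℓ → PosBool.Sat {q' | E ℓ q q'} (M.delta q (w ℓ))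

/-- An ω-branch of a run DAG. -/
def RunDAG.IsBranch {M : ABA α Q} {w : ℕ → α} (G : M.RunDAG w) (b : ℕ → Q) : Prop :=
  b 0 = M.init ∧ ∀ ℓ, G.E ℓ (b ℓ) (b (ℓ + 1))

/-- A run DAG is accepting if every ω-branch visits accepting states infinitely often. -/
def RunDAG.Accepting {M : ABA α Q} {w : ℕ → α} (G : M.RunDAG w) : Prop :=
  ∀ b, G.IsBranch b → ∀ n, ∃ m, n ≤ m ∧ b m ∈ M.acc

/-- `M` accepts `w` if there is an accepting run DAG of `M` over `w`. -/
def Accepts (M : ABA α Q) (w : ℕ → α) : Prop := ∃ G : M.RunDAG w, G.Accepting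

/-- The language of `M`. -/
def lang (M : ABA α Q) : Set (ℕ → α) := {w | M.Accepts w}

/-- `R`: the union of the rejecting SCCs. -/
def RejPart (M : ABA α Q) : Set Q := {q | M.sccOf q ∩ M.acc = ∅}

/-- `Acc`: the union of the accepting SCCs. -/
def AccPart (M : ABA α Q) : Set Q := {q | M.sccOf q ⊆ M.acc}

end ABA

/-- The suffix `w[i⋯]` of an ω-word. -/
def suffix {α : Type v} (w : ℕ → α) (i : ℕ) : ℕ → α := fun n => w (i + n)

/-- `Q_w = {s ∈ Q | w ∈ L(A^s)}`. -/
def QSet {α : Type v} {Q : Type u} (M : ABA α Q) (w : ℕ → α) : Set Q :=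
  {s | w ∈ (M.setInit s).lang}

/-- The unique sequence `R_w`, i.e. `i ↦ Q_{w[i⋯]}`. -/
def QSeq {α : Type v} {Q : Type u} (M : ABA α Q) (w : ℕ → α) (i : ℕ) : Set Q :=
  QSet M (suffix w i)

/-- A nondeterministic Büchi automaton. -/
structure NBA (α : Type v) (P : Type u) where
  init : Set P
  delta : P → α → Set P
  acc : Set P

namespace NBA

variable {α : Type v} {P : Type u}

/-- A macrorun of `N` over `w`. -/
def IsMacrorun (N : NBA α P) (w : ℕ → α) (ρ : ℕ → P) : Prop :=
  ρ 0 ∈ N.init ∧ ∀ i, ρ (i + 1) ∈ N.delta (ρ i) (w i)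

/-- An accepting macrorun of `N` over `w`. -/
def IsAccMacrorun (N : NBA α P) (w : ℕ → α) (ρ : ℕ → P) : Prop :=
  N.IsMacrorun w ρ ∧ ∀ n, ∃ m, n ≤ m ∧ ρ m ∈ N.acc

/-- The language of an NBA. -/
def lang (N : NBA α P) : Set (ℕ → α) := {w | ∃ ρ, N.IsAccMacrorun w ρ}

/-- `N^m`: the NBA `N` with set of initial states `{m}`. -/
def fromState (N : NBA α P) (p : P) : NBA α P := { N with init := {p} }

/-- An NBA is unambiguous if it has at most one accepting macrorun over every word. -/
def Unambiguous (N : NBA α P) : Prop :=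
  ∀ w ρ₁ ρ₂, N.IsAccMacrorun w ρ₁ → N.IsAccMacrorun w ρ₂ → ρ₁ = ρ₂

end NBA

/-- Macrostates of the Bustan–Rubin–Vardi construction: tuples `(Q₁, Q₂, Q₃, Q₄)`. -/
abbrev BRVState (Q : Type u) := Set Q × Set Q × Set Q × Set Q

/-- Consistency of a BRV tuple: `Q₂ = Q∖Q₁`, `Q₃ ⊆ Q₁∖F`, `Q₄ ⊆ Q₂∖F̂`. -/
def BRVConsistent {α : Type v} {Q : Type u} (M : ABA α Q) (m : BRVState Q) : Prop :=
  m.2.1 = m.1ᶜ ∧ m.2.2.1 ⊆ m.1 \ M.acc ∧ m.2.2.2 ⊆ m.2.1 \ M.dual.acc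

/-- The Bustan–Rubin–Vardi NBA `B` constructed from an AWA. -/
def BRV {α : Type v} {Q : Type u} (M : ABA α Q) : NBA α (BRVState Q) where
  init := {m | BRVConsistent M m ∧ M.init ∈ m.1}
  delta := fun m σ =>
    {m' | BRVConsistent M m ∧ BRVConsistent M m' ∧
      (∀ s ∈ m.1, PosBool.Sat m'.1 (M.delta s σ)) ∧
      (∀ s ∈ m.2.1, PosBool.Sat m'.2.1 (M.dual.delta s σ)) ∧
      ((m.2.2.1 = ∅ ∧ m.2.2.2 = ∅ ∧ m'.2.2.1 = m'.1 \ M.acc ∧ m'.2.2.2 = m'.2.1 \ M.dual.acc) ∨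
       ((m.2.2.1 ≠ ∅ ∨ m.2.2.2 ≠ ∅) ∧
        (∃ Y₃ ⊆ m'.1, (∀ s ∈ m.2.2.1, PosBool.Sat Y₃ (M.delta s σ)) ∧ m'.2.2.1 = Y₃ \ M.acc) ∧
        (∃ Y₄ ⊆ m'.2.1, (∀ s ∈ m.2.2.2, PosBool.Sat Y₄ (M.dual.delta s σ)) ∧
          m'.2.2.2 = Y₄ \ M.dual.acc)))}
  acc := {m | BRVConsistent M m ∧ m.2.2.1 = ∅ ∧ m.2.2.2 = ∅}

/-- The domain of the distance function at level `i`: `(Q₁ⁱ ∩ R) ∪ (Acc ∖ Q₁ⁱ)`. -/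
def DistDom {α : Type v} {Q : Type u} (M : ABA α Q) (QS : ℕ → Set Q) (i : ℕ) : Set Q :=
  (QS i ∩ M.RejPart) ∪ (M.AccPart \ QS i)

/-- Consistency of a sequence of distance functions (Rules R1 and R2). -/
def ConsistentDist {α : Type v} {Q : Type u} (M : ABA α Q) (w : ℕ → α)
    (QS : ℕ → Set Q) (d : ℕ → Q → ℕ) : Prop :=
  ∀ i : ℕ,
    (∀ p ∈ M.RejPart ∩ QS i,
      PosBool.Sat ((QS (i + 1) \ M.sccOf p) ∪
        {q | q ∈ M.sccOf p ∩ QS (i + 1) ∧ d (i + 1) q ≤ d i p - 1}) (M.delta p (w i)) ∧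
      (1 < d i p →
        ¬ PosBool.Sat ((QS (i + 1) \ M.sccOf p) ∪
          {q | q ∈ M.sccOf p ∩ QS (i + 1) ∧ d (i + 1) q ≤ d i p - 2}) (M.delta p (w i)))) ∧
    (∀ p ∈ M.AccPart \ QS i,
      PosBool.Sat ((QS (i + 1) ∪ M.sccOf p)ᶜ ∪
        {q | q ∈ M.sccOf p \ QS (i + 1) ∧ d (i + 1) q ≤ d i p - 1}) (M.dual.delta p (w i)) ∧
      (1 < d i p →
        ¬ PosBool.Sat ((QS (i + 1) ∪ M.sccOf p)ᶜ ∪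
          {q | q ∈ M.sccOf p \ QS (i + 1) ∧ d (i + 1) q ≤ d i p - 2}) (M.dual.delta p (w i))))

/-- Strict part of a preorder. -/
def StrictOf {Q : Type u} (le : Q → Q → Prop) (p q : Q) : Prop := le p q ∧ ¬ le q p

/-- `le` is a total preorder on `D` (as a relation over `D × D`). -/
def IsTotalPreorderOn {Q : Type u} (D : Set Q) (le : Q → Q → Prop) : Prop :=
  (∀ p q, le p q → p ∈ D ∧ q ∈ D) ∧ (∀ p ∈ D, le p p) ∧
  (∀ p q r, le p q → le q r → le p r) ∧ (∀ p ∈ D, ∀ q ∈ D, le p q ∨ le q p)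

/-- `D` is downwards closed w.r.t. `le` inside the domain `Dom`. -/
def DownClosed {Q : Type u} (le : Q → Q → Prop) (Dom D : Set Q) : Prop :=
  D ⊆ Dom ∧ ∀ q ∈ D, ∀ q', le q' q → q' ∈ D

/-- The set of maximal elements of a preorder on the domain `Dom`. -/
def MaxSet {Q : Type u} (le : Q → Q → Prop) (Dom : Set Q) : Set Q :=
  {q | q ∈ Dom ∧ ∀ q' ∈ Dom, ¬ StrictOf le q q'}

/-- Rule R1' for a rejecting SCC `C`, letter `σ`, sets `Q₁, Q₁'` and preorders `le, le'`. -/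
def RuleR1 {α : Type v} {Q : Type u} (M : ABA α Q) (C : Set Q) (σ : α)
    (Q1 Q1' : Set Q) (le le' : Q → Q → Prop) : Prop :=
  ∀ q ∈ C ∩ Q1, ∀ q' ∈ C ∩ Q1,
    (StrictOf le q q' ↔ ∃ r ∈ C ∩ Q1',
      PosBool.Sat ({r' | r' ∈ C ∩ Q1' ∧ StrictOf le' r' r} ∪ (Q1' \ C)) (M.delta q σ) ∧
      ¬ PosBool.Sat ({r' | r' ∈ C ∩ Q1' ∧ StrictOf le' r' r} ∪ (Q1' \ C)) (M.delta q' σ))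

/-- Rule R2' for an accepting SCC `C`, letter `σ`, sets `Q₁, Q₁'` and preorders `le, le'`. -/
def RuleR2 {α : Type v} {Q : Type u} (M : ABA α Q) (C : Set Q) (σ : α)
    (Q1 Q1' : Set Q) (le le' : Q → Q → Prop) : Prop :=
  ∀ q ∈ C \ Q1, ∀ q' ∈ C \ Q1,
    (StrictOf le q q' ↔ ∃ r ∈ C \ Q1',
      PosBool.Sat ({r' | r' ∈ C \ Q1' ∧ StrictOf le' r' r} ∪ (Q1' ∪ C)ᶜ) (M.dual.delta q σ) ∧
      ¬ PosBool.Sat ({r' | r' ∈ C \ Q1' ∧ StrictOf le' r' r} ∪ (Q1' ∪ C)ᶜ) (M.dual.delta q' σ))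

/-- Consistency of a sequence of families of total preorders (Rules R1' and R2'). -/
def ConsistentPre {α : Type v} {Q : Type u} (M : ABA α Q) (w : ℕ → α)
    (QS : ℕ → Set Q) (pre : ℕ → Set Q → Q → Q → Prop) : Prop :=
  ∀ i C, M.IsSCC C →
    (C ⊆ M.RejPart →
      IsTotalPreorderOn (C ∩ QS i) (pre i C) ∧
      RuleR1 M C (w i) (QS i) (QS (i + 1)) (pre i C) (pre (i + 1) C)) ∧
    (C ⊆ M.AccPart →
      IsTotalPreorderOn (C \ QS i) (pre i C) ∧
      RuleR2 M C (w i) (QS i) (QS (i + 1)) (pre i C) (pre (i + 1) C))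

/-- Macrostates of the `B_u` construction: `(Q₁, Q₂, {⪯_C}_{C∈S}, S, D)`. -/
abbrev BuState (Q : Type u) := Set Q × Set Q × (Set Q → Q → Q → Prop) × Set Q × Set Q

def BuState.q1 {Q : Type u} (m : BuState Q) : Set Q := m.1
def BuState.q2 {Q : Type u} (m : BuState Q) : Set Q := m.2.1
def BuState.pre {Q : Type u} (m : BuState Q) : Set Q → Q → Q → Prop := m.2.2.1
def BuState.sS {Q : Type u} (m : BuState Q) : Set Q := m.2.2.2.1
def BuState.dD {Q : Type u} (m : BuState Q) : Set Q := m.2.2.2.2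

/-- Well-formedness of a `B_u` macrostate. -/
def BuWF {α : Type v} {Q : Type u} (M : ABA α Q) (m : BuState Q) : Prop :=
  m.q2 = m.q1ᶜ ∧
  (∀ C, M.IsSCC C →
    (C ⊆ M.RejPart → IsTotalPreorderOn (m.q1 ∩ C) (m.pre C)) ∧
    (C ⊆ M.AccPart → IsTotalPreorderOn (m.q2 ∩ C) (m.pre C))) ∧
  (∀ C, ¬ M.IsSCC C → m.pre C = fun _ _ => False) ∧
  M.IsSCC m.sS ∧
  (m.sS ⊆ M.RejPart → DownClosed (m.pre m.sS) (m.q1 ∩ m.sS) m.dD) ∧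
  (m.sS ⊆ M.AccPart → DownClosed (m.pre m.sS) (m.q2 ∩ m.sS) m.dD)

/-- The NBA `B_u` constructed from an AWA `M`, a round-robin successor `next` on SCCs
and an initial SCC `C₀`. -/
def Bu {α : Type v} {Q : Type u} (M : ABA α Q) (next : Set Q → Set Q) (C0 : Set Q) :
    NBA α (BuState Q) where
  init := {m | BuWF M m ∧ M.init ∈ m.q1 ∧ m.sS = C0 ∧ m.dD = ∅}
  delta := fun m σ =>
    {m' | BuWF M m ∧ BuWF M m' ∧
      (∀ s ∈ m.q1, PosBool.Sat m'.q1 (M.delta s σ)) ∧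
      (∀ s ∈ m.q2, PosBool.Sat m'.q2 (M.dual.delta s σ)) ∧
      (∀ C, M.IsSCC C →
        (C ⊆ M.RejPart → RuleR1 M C σ m.q1 m'.q1 (m.pre C) (m'.pre C)) ∧
        (C ⊆ M.AccPart → RuleR2 M C σ m.q1 m'.q1 (m.pre C) (m'.pre C))) ∧
      (m.dD = ∅ → m'.sS = next m.sS ∧
        (m'.sS ⊆ M.RejPart → m'.dD = m'.q1 ∩ m'.sS) ∧
        (m'.sS ⊆ M.AccPart → m'.dD = m'.q2 ∩ m'.sS)) ∧
      (m.dD ≠ ∅ → m'.sS = m.sS ∧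
        (m.sS ⊆ M.RejPart →
          (∀ s ∈ m.dD, PosBool.Sat (m'.dD ∪ (m'.q1 \ m.sS)) (M.delta s σ)) ∧
          (∀ D'', DownClosed (m'.pre m.sS) (m'.q1 ∩ m.sS) D'' →
            (∀ s ∈ m.dD, PosBool.Sat (D'' ∪ (m'.q1 \ m.sS)) (M.delta s σ)) → m'.dD ⊆ D'')) ∧
        (m.sS ⊆ M.AccPart →
          (∀ s ∈ m.dD, PosBool.Sat (m'.dD ∪ (m'.q2 \ m.sS)) (M.dual.delta s σ)) ∧
          (∀ D'', DownClosed (m'.pre m.sS) (m'.q2 ∩ m.sS) D'' →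
            (∀ s ∈ m.dD, PosBool.Sat (D'' ∪ (m'.q2 \ m.sS)) (M.dual.delta s σ)) → m'.dD ⊆ D'')))}
  acc := {m | BuWF M m ∧ m.dD = ∅}

/-- Macrostates of the `U` construction: `(Q₁, Q₂, ⪯_C, C, D)`. -/
abbrev UState (Q : Type u) := Set Q × Set Q × (Q → Q → Prop) × Set Q × Set Q

def UState.q1 {Q : Type u} (m : UState Q) : Set Q := m.1
def UState.q2 {Q : Type u} (m : UState Q) : Set Q := m.2.1
def UState.pre {Q : Type u} (m : UState Q) : Q → Q → Prop := m.2.2.1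
def UState.cC {Q : Type u} (m : UState Q) : Set Q := m.2.2.2.1
def UState.dD {Q : Type u} (m : UState Q) : Set Q := m.2.2.2.2

/-- Well-formedness of a `U` macrostate. -/
def UWF {α : Type v} {Q : Type u} (M : ABA α Q) (m : UState Q) : Prop :=
  m.q2 = m.q1ᶜ ∧ M.IsSCC m.cC ∧
  (m.cC ⊆ M.RejPart →
    IsTotalPreorderOn (m.q1 ∩ m.cC) m.pre ∧
    (m.dD = m.q1 ∩ m.cC ∨ m.dD = (m.q1 ∩ m.cC) \ MaxSet m.pre (m.q1 ∩ m.cC))) ∧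
  (m.cC ⊆ M.AccPart →
    IsTotalPreorderOn (m.q2 ∩ m.cC) m.pre ∧
    (m.dD = m.q2 ∩ m.cC ∨ m.dD = (m.q2 ∩ m.cC) \ MaxSet m.pre (m.q2 ∩ m.cC)))

/-- The NBA `U` constructed from an AWA `M`, a round-robin successor `next` on SCCs
and an initial SCC `C₀`. -/
def Uaut {α : Type v} {Q : Type u} (M : ABA α Q) (next : Set Q → Set Q) (C0 : Set Q) :
    NBA α (UState Q) where
  init := {m | UWF M m ∧ M.init ∈ m.q1 ∧ m.cC = C0 ∧ m.dD = ∅}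
  delta := fun m σ =>
    {m' | UWF M m ∧ UWF M m' ∧
      (∀ s ∈ m.q1, PosBool.Sat m'.q1 (M.delta s σ)) ∧
      (∀ s ∈ m.q2, PosBool.Sat m'.q2 (M.dual.delta s σ)) ∧
      (m.dD = ∅ → m'.cC = next m.cC ∧
        (m'.cC ⊆ M.RejPart → m'.dD = m'.q1 ∩ m'.cC) ∧
        (m'.cC ⊆ M.AccPart → m'.dD = m'.q2 ∩ m'.cC)) ∧
      (m.dD ≠ ∅ → m'.cC = m.cC ∧
        (m.cC ⊆ M.RejPart →
          RuleR1 M m.cC σ m.q1 m'.q1 m.pre m'.pre ∧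
          DownClosed m'.pre (m'.q1 ∩ m.cC) m'.dD ∧
          (∀ s ∈ m.dD, PosBool.Sat (m'.dD ∪ (m'.q1 \ m.cC)) (M.delta s σ)) ∧
          (∀ D'', DownClosed m'.pre (m'.q1 ∩ m.cC) D'' →
            (∀ s ∈ m.dD, PosBool.Sat (D'' ∪ (m'.q1 \ m.cC)) (M.delta s σ)) → m'.dD ⊆ D'')) ∧
        (m.cC ⊆ M.AccPart →
          RuleR2 M m.cC σ m.q1 m'.q1 m.pre m'.pre ∧
          DownClosed m'.pre (m'.q2 ∩ m.cC) m'.dD ∧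
          (∀ s ∈ m.dD, PosBool.Sat (m'.dD ∪ (m'.q2 \ m.cC)) (M.dual.delta s σ)) ∧
          (∀ D'', DownClosed m'.pre (m'.q2 ∩ m.cC) D'' →
            (∀ s ∈ m.dD, PosBool.Sat (D'' ∪ (m'.q2 \ m.cC)) (M.dual.delta s σ)) → m'.dD ⊆ D'')))}
  acc := {m | UWF M m ∧ m.dD = ∅}

/-- `tpo n`: the number of total preorders on an `n`-element set. -/
noncomputable def tpo (n : ℕ) : ℕ :=
  Nat.card {r : Fin n → Fin n → Prop // Reflexive r ∧ Transitive r ∧ ∀ a b, r a b ∨ r b a}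

/-! ### Positive Boolean formulas and duality -/

namespace PosBool

variable {Q : Type*}

theorem Sat.mono {Y Z : Set Q} {θ : PosBool Q} (h : ∀ s, s ∈ Y → s ∈ Z) (hs : Sat Y θ) :
    Sat Z θ := by
  induction θ with
  | tt => trivial
  | ff => exact hs
  | var q => exact h q hs
  | band a b iha ihb => exact ⟨iha hs.1, ihb hs.2⟩
  | bor a b iha ihb => exact hs.imp iha ihb

theorem sat_compl_dual (Y : Set Q) (θ : PosBool Q) : Sat Yᶜ θ.dual ↔ ¬ Sat Y θ := by
  induction θ with
  | tt => simp [Sat, dual]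
  | ff => simp [Sat, dual]
  | var q => simp [Sat, dual]
  | band a b iha ihb => simp only [Sat, dual, iha, ihb]; tauto
  | bor a b iha ihb => simp only [Sat, dual, iha, ihb]; tauto

theorem exists_mem_of_sat_dual {Y Z : Set Q} {θ : PosBool Q} (hY : Sat Y θ)
    (hZ : Sat Z θ.dual) : ∃ s, s ∈ Y ∧ s ∈ Z ∧ s ∈ θ.vars := by
  induction θ with
  | tt => exact hZ.elim
  | ff => exact hY.elim
  | var q => exact ⟨q, hY, hZ, rfl⟩
  | band a b iha ihb =>
    rcases hZ with hZ | hZ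
    · obtain ⟨s, h1, h2, h3⟩ := iha hY.1 hZ
      exact ⟨s, h1, h2, Or.inl h3⟩
    · obtain ⟨s, h1, h2, h3⟩ := ihb hY.2 hZ
      exact ⟨s, h1, h2, Or.inr h3⟩
  | bor a b iha ihb =>
    rcases hY with hY | hY
    · obtain ⟨s, h1, h2, h3⟩ := iha hY hZ.1
      exact ⟨s, h1, h2, Or.inl h3⟩
    · obtain ⟨s, h1, h2, h3⟩ := ihb hY hZ.2
      exact ⟨s, h1, h2, Or.inr h3⟩

end PosBool

namespace ABA

variable {α Q : Type*}

/-! ### Ranked sets of positions -/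

/-- `X` is a set of positions (level, state) with a positional winning strategy witnessed by the
rank function `r`: every transition from `X` is satisfied by successors in `X`, and the rank drops
on each step between two non-accepting states. Levels index the fixed word `w`, so no suffixes of
`w` are needed. -/
def Ranked (M : ABA α Q) (w : ℕ → α) (X : ℕ → Set Q) (r : ℕ → Q → ℕ) : Prop :=
  ∀ i, ∀ s ∈ X i, PosBool.Sat
    {s' | s' ∈ X (i + 1) ∧ (s ∉ M.acc → s' ∉ M.acc → r (i + 1) s' < r i s)} (M.delta s (w i))

theorem Ranked.accepts {M : ABA α Q} {w : ℕ → α} {X : ℕ → Set Q} {r : ℕ → Q → ℕ}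
    (h : M.Ranked w X r) (h0 : M.init ∈ X 0) : M.Accepts w := by
  refine ⟨{ V := X
            E := fun i s s' => s ∈ X i ∧
              (s' ∈ X (i + 1) ∧ (s ∉ M.acc → s' ∉ M.acc → r (i + 1) s' < r i s))
            init_mem := h0
            edge_src := fun _ _ _ h => h.1
            edge_tgt := fun _ _ _ h => h.2.1
            sat := fun i s hs => (h i s hs).mono fun s' hs' => ⟨hs, hs'⟩ }, ?_⟩
  intro b hb n
  by_contra! hn
  -- A branch avoiding `acc` from level `n` on would make the rank descend forever.
  have key : ∀ k, r (n + k) (b (n + k)) + k ≤ r n (b n) := by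
    intro k
    induction k with
    | zero => simp
    | succ k ih =>
      have h1 := (hb.2 (n + k)).2.2 (hn _ (by omega)) (hn _ (by omega))
      have h2 : r (n + (k + 1)) (b (n + (k + 1))) < r (n + k) (b (n + k)) := h1
      omega
  have := key (r n (b n) + 1)
  omega

/-- The union of all ranked sets of positions. -/
def Win (M : ABA α Q) (w : ℕ → α) (i : ℕ) : Set Q :=
  {s | ∃ X r, M.Ranked w X r ∧ s ∈ X i}

/-- The least rank that a position has in some ranked set containing it. -/
noncomputable def winRank (M : ABA α Q) (w : ℕ → α) (i : ℕ) (s : Q) : ℕ :=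
  sInf {n | ∃ X r, M.Ranked w X r ∧ s ∈ X i ∧ r i s = n}

theorem win_ranked (M : ABA α Q) (w : ℕ → α) : M.Ranked w (M.Win w) (M.winRank w) := by
  intro i s hs
  have hne : {n | ∃ X r, M.Ranked w X r ∧ s ∈ X i ∧ r i s = n}.Nonempty := by
    obtain ⟨X, r, h, hX⟩ := hs
    exact ⟨_, X, r, h, hX, rfl⟩
  obtain ⟨X, r, h, hX, hr⟩ := Nat.sInf_mem hne
  refine (h i s hX).mono fun s' hs' => ⟨⟨X, r, h, hs'.1⟩, fun ha ha' => ?_⟩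
  calc M.winRank w (i + 1) s' ≤ r (i + 1) s' := Nat.sInf_le ⟨X, r, h, hs'.1, rfl⟩
    _ < r i s := hs'.2 ha ha'
    _ = M.winRank w i s := hr

/-- A position with enough successors in `Win` could itself be added to `Win`, with a rank above
those of its finitely many successors. -/
theorem not_sat_win [Finite Q] {M : ABA α Q} {w : ℕ → α} {i : ℕ} {s : Q}
    (hs : s ∉ M.Win w i) : ¬ PosBool.Sat (M.Win w (i + 1)) (M.delta s (w i)) := by
  classical
  intro hsat
  obtain ⟨B, hB⟩ := (Set.finite_range (M.winRank w (i + 1))).bddAbove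
  refine hs ⟨fun j => {t | t ∈ M.Win w j ∨ (j = i ∧ t = s)},
    fun j t => if j = i ∧ t = s then B + 1 else M.winRank w j t, ?_, Or.inr ⟨rfl, rfl⟩⟩
  rintro j t (ht | ⟨rfl, rfl⟩)
  · have hne : ¬ (j = i ∧ t = s) := by
      rintro ⟨rfl, rfl⟩
      exact hs ht
    refine (M.win_ranked w j t ht).mono fun s' hs' => ⟨Or.inl hs'.1, fun ha ha' => ?_⟩
    have hne' : ¬ (j + 1 = i ∧ s' = s) := by
      rintro ⟨rfl, rfl⟩
      exact hs hs'.1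
    simpa only [if_neg hne, if_neg hne'] using hs'.2 ha ha'
  · refine hsat.mono fun s' hs' => ⟨Or.inl hs', fun _ _ => ?_⟩
    have := hB (Set.mem_range_self s')
    simp
    omega

/-! ### The strategy of the dual automaton -/

/-- From state `s` at level `i`, the dual automaton can stay outside `Win` and reach a state outside
`acc` within `n` steps (at least one step being taken). -/
def Force (M : ABA α Q) (w : ℕ → α) : ℕ → ℕ → Q → Prop
  | 0, _, _ => False
  | n + 1, i, s => PosBool.Sat
      {s' | s' ∉ M.Win w (i + 1) ∧ (s' ∈ M.acc → Force M w n (i + 1) s')} (M.delta s (w i)).dual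

theorem Force.succ {M : ABA α Q} {w : ℕ → α} {n i : ℕ} {s : Q} (h : M.Force w n i s) :
    M.Force w (n + 1) i s := by
  induction n generalizing i s with
  | zero => exact h.elim
  | succ n ih => exact PosBool.Sat.mono (fun s' hs' => ⟨hs'.1, fun ha => ih (hs'.2 ha)⟩) h

theorem Force.mono {M : ABA α Q} {w : ℕ → α} {m n i : ℕ} {s : Q} (hmn : m ≤ n)
    (h : M.Force w m i s) : M.Force w n i s := by
  induction n, hmn using Nat.le_induction with
  | base => exact h
  | succ n _ ih => exact ih.succ

theorem exists_force [Finite Q] {M : ABA α Q} {w : ℕ → α} {i : ℕ} {s : Q}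
    (hs : s ∉ M.Win w i) (ha : s ∈ M.acc) : ∃ n, M.Force w n i s := by
  by_contra hno
  -- Adding to `Win` all accepting positions without `Force` gives another ranked set.
  refine hs ⟨fun j => {t | t ∈ M.Win w j ∨ (t ∈ M.acc ∧ ¬ ∃ n, M.Force w n j t)},
    M.winRank w, ?_, Or.inr ⟨ha, hno⟩⟩
  rintro j t (ht | ⟨hta, htn⟩)
  · exact (M.win_ranked w j t ht).mono fun s' hs' => ⟨Or.inl hs'.1, hs'.2⟩
  · by_contra hsat
    rw [← PosBool.sat_compl_dual] at hsat
    apply htn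
    have hex : ∀ u : Q, ∃ n, (∃ m, M.Force w m (j + 1) u) → M.Force w n (j + 1) u := by
      intro u
      by_cases h : ∃ m, M.Force w m (j + 1) u
      · exact ⟨h.choose, fun _ => h.choose_spec⟩
      · exact ⟨0, fun h' => (h h').elim⟩
    choose f hf using hex
    obtain ⟨B, hB⟩ := (Set.finite_range f).bddAbove
    refine ⟨B + 1, PosBool.Sat.mono (fun u hu => ?_) hsat⟩
    have hu' : ¬ (u ∈ M.Win w (j + 1) ∨ (u ∈ M.acc ∧ ¬ ∃ n, M.Force w n (j + 1) u)) :=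
      fun h => hu ⟨h, fun h' => (h' hta).elim⟩
    push Not at hu'
    exact ⟨hu'.1, fun hua => (hf u (hu'.2 hua)).mono (hB (Set.mem_range_self u))⟩

theorem dual_ranked [Finite Q] (M : ABA α Q) (w : ℕ → α) :
    M.dual.Ranked w (fun i => (M.Win w i)ᶜ) (fun i s => sInf {n | M.Force w n i s}) := by
  intro i s hs
  by_cases ha : s ∈ M.acc
  · have hmem : M.Force w (sInf {n | M.Force w n i s}) i s := Nat.sInf_mem (exists_force hs ha)
    rcases hk : sInf {n | M.Force w n i s} with _ | m
    · rw [hk] at hmem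
      exact hmem.elim
    · rw [hk] at hmem
      refine PosBool.Sat.mono (fun s' hs' => ⟨hs'.1, fun _ ha' => ?_⟩) hmem
      have h1 : sInf {n | M.Force w n (i + 1) s'} ≤ m :=
        Nat.sInf_le (hs'.2 (not_not.mp ha'))
      show sInf {n | M.Force w n (i + 1) s'} < sInf {n | M.Force w n i s}
      omega
  · exact ((PosBool.sat_compl_dual _ _).2 (not_sat_win hs)).mono
      fun s' hs' => ⟨hs', fun h => (h ha).elim⟩

/-! ### Disjointness of the two languages -/

/-- Two run DAGs of `M` and of its dual with the same initial state share an ω-branch which follows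
the underlying graph of `M`. -/
theorem exists_common_branch {M : ABA α Q} {w : ℕ → α} {q : Q}
    (G : (M.setInit q).RunDAG w) (H : (M.dual.setInit q).RunDAG w) :
    ∃ b, G.IsBranch b ∧ H.IsBranch b ∧ ∀ n, M.edge (b n) (b (n + 1)) := by
  have step : ∀ i (s : {s // s ∈ G.V i ∧ s ∈ H.V i}),
      ∃ t : {t // t ∈ G.V (i + 1) ∧ t ∈ H.V (i + 1)},
      G.E i s t ∧ H.E i s t ∧ M.edge s t := by
    rintro i ⟨s, h1, h2⟩
    obtain ⟨t, ht1, ht2, ht3⟩ := PosBool.exists_mem_of_sat_dual (G.sat i s h1) (H.sat i s h2)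
    exact ⟨⟨t, G.edge_tgt _ _ _ ht1, H.edge_tgt _ _ _ ht2⟩, ht1, ht2, ⟨w i, ht3⟩⟩
  choose f hf using step
  let b : ∀ i, {s // s ∈ G.V i ∧ s ∈ H.V i} :=
    fun i => Nat.rec ⟨q, G.init_mem, H.init_mem⟩ (fun i s => f i s) i
  exact ⟨fun i => (b i).1, ⟨rfl, fun i => (hf i (b i)).1⟩, ⟨rfl, fun i => (hf i (b i)).2.1⟩,
    fun i => (hf i (b i)).2.2⟩

/-- By finiteness, an infinite path of the underlying graph eventually stays in one SCC. -/
theorem exists_trapping_scc [Finite Q] {M : ABA α Q} {b : ℕ → Q}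
    (hb : ∀ n, M.edge (b n) (b (n + 1))) : ∃ p n, ∀ m, n ≤ m → b m ∈ M.sccOf p := by
  have hreach : ∀ m n, m ≤ n → M.reach (b m) (b n) := by
    intro m n hmn
    induction n, hmn using Nat.le_induction with
    | base => exact Relation.ReflTransGen.refl
    | succ n _ ih => exact ih.tail (hb n)
  obtain ⟨p, hp⟩ := Finite.exists_infinite_fiber b
  have hinf : (b ⁻¹' {p}).Infinite := Set.infinite_coe_iff.mp hp
  obtain ⟨n, hn⟩ := hinf.nonempty
  refine ⟨p, n, fun m hm => ?_⟩
  obtain ⟨k, hk, hmk⟩ := hinf.exists_gt m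
  have hn' : b n = p := hn
  have hk' : b k = p := hk
  exact ⟨hn' ▸ hreach n m hm, hk' ▸ hreach m k hmk.le⟩

theorem not_accepts_both [Finite Q] {M : ABA α Q} (hweak : M.IsWeak) {w : ℕ → α} {q : Q}
    (h1 : (M.setInit q).Accepts w) (h2 : (M.dual.setInit q).Accepts w) : False := by
  obtain ⟨G, hG⟩ := h1
  obtain ⟨H, hH⟩ := h2
  obtain ⟨b, hbG, hbH, hbe⟩ := exists_common_branch G H
  obtain ⟨p, n, hp⟩ := exists_trapping_scc hbe
  obtain ⟨m, hm, hma⟩ := hG b hbG n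
  obtain ⟨k, hk, hka⟩ := hH b hbH n
  rcases hweak p with h | h
  · exact hka (h (hp k hk))
  · exact Set.notMem_empty _ (h ▸ ⟨hp m hm, hma⟩ : b m ∈ (∅ : Set Q))

end ABA

/-! ### Complementation -/

/-- For an AWA `A` and its dual `Â`, for every state `q`,
`L(A^q) = Σ^ω ∖ L(Â^q)`. -/
theorem awa_dual_lang {α Q : Type} [Fintype α] [Fintype Q] (M : ABA α Q)
    (hweak : M.IsWeak) (hcomp : M.Complete) :
    ∀ q : Q, (M.setInit q).lang = (Set.univ : Set (ℕ → α)) \ (M.dual.setInit q).lang := by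
  intro q
  ext w
  refine ⟨fun h1 => ⟨trivial, fun h2 => ABA.not_accepts_both hweak h1 h2⟩, fun h => ?_⟩
  by_cases hq : q ∈ M.Win w 0
  · have hr : (M.setInit q).Ranked w (M.Win w) (M.winRank w) := M.win_ranked w
    exact hr.accepts hq
  · have hr : (M.dual.setInit q).Ranked w (fun i => (M.Win w i)ᶜ)
        (fun i s => sInf {n | M.Force w n i s}) := M.dual_ranked w
    exact (h.2 (hr.accepts hq)).elim
end

section
/- There exists an alternating weak Büchi automaton A such that the Bustan–Rubin–Vardi NBA B constructed from A is not unambiguous, i.e., B admits at least two distinct accepting macroruns over some ω-word. -/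
/-!
The Bustan–Rubin–Vardi automaton chooses nondeterministically the set `Y₃` of successors whose
obligations it keeps tracking; choosing `Y₃` larger than necessary postpones the next breakpoint.
The one-state automaton with transition formula `tt` and no accepting state shows this: after a
breakpoint the tracked set `Q₃` is the whole state space, and since `tt` is satisfied by every set,
it may be emptied or kept at every later step. Hence every infinite set of positions without two
consecutive members is the set of breakpoints of an accepting macrorun over the unique word. The
even numbers and the multiples of `3` give two such macroruns, which even start in the same
macrostate.
-/

universe u v

/-! ### A one-state automaton with many accepting macroruns -/

/-- The alternating automaton with a single, rejecting state and transition formula `tt`. -/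
def trivialAWA : ABA Unit Unit where
  init := ()
  delta := fun _ _ => .tt
  acc := ∅

/-- The sequence of macrostates of `BRV trivialAWA` in which `Q₃` is empty exactly at the
positions (breakpoints) satisfying `S`, and is the whole state space elsewhere. -/
def breakpointRun (S : ℕ → Prop) (n : ℕ) : BRVState Unit :=
  (Set.univ, ∅, {_q | ¬ S n}, ∅)

theorem breakpointRun_consistent (S : ℕ → Prop) (n : ℕ) :
    BRVConsistent trivialAWA (breakpointRun S n) := by
  simp [BRVConsistent, breakpointRun, trivialAWA]

theorem breakpointRun_accepting (S : ℕ → Prop) (hstep : ∀ n, S n → ¬ S (n + 1))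
    (hinf : ∀ n, ∃ m, n ≤ m ∧ S m) (w : ℕ → Unit) :
    (BRV trivialAWA).IsAccMacrorun w (breakpointRun S) := by
  refine ⟨⟨⟨breakpointRun_consistent S 0, Set.mem_univ _⟩, fun i => ?_⟩, fun n => ?_⟩
  · refine ⟨breakpointRun_consistent S i, breakpointRun_consistent S (i + 1),
      fun s _ => trivial, fun s hs => hs.elim, ?_⟩
    by_cases h : S i
    · left
      simp [breakpointRun, trivialAWA, ABA.dual, h, hstep i h]
    · right
      refine ⟨Or.inl ?_, ⟨{_q | ¬ S (i + 1)}, Set.subset_univ _, fun s _ => trivial, ?_⟩,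
        ⟨∅, Set.empty_subset _, fun s hs => hs.elim, ?_⟩⟩
      · simp [breakpointRun, h]
      · simp [breakpointRun, trivialAWA]
      · simp [breakpointRun]
  · obtain ⟨m, hm, hS⟩ := hinf n
    exact ⟨m, hm, breakpointRun_consistent S m, by simp [breakpointRun, hS], rfl⟩

/-- there is an AWA whose BRV automaton is not unambiguous. -/
theorem brv_not_unambiguous :
    ∃ (α Q : Type) (_ : Fintype α) (_ : Fintype Q) (M : ABA α Q),
      M.IsWeak ∧ M.Complete ∧
      ∃ (w : ℕ → α) (ρ₁ ρ₂ : ℕ → BRVState Q),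
        (BRV M).IsAccMacrorun w ρ₁ ∧ (BRV M).IsAccMacrorun w ρ₂ ∧ ρ₁ ≠ ρ₂ := by
  refine ⟨Unit, Unit, inferInstance, inferInstance, trivialAWA,
    fun q => Or.inr (Set.inter_empty _), fun _ _ => trivial, fun _ => (),
    breakpointRun (fun n => n % 2 = 0), breakpointRun (fun n => n % 3 = 0),
    breakpointRun_accepting _ (fun n h => by omega) (fun n => ⟨2 * n, by omega, by omega⟩) _,
    breakpointRun_accepting _ (fun n h => by omega) (fun n => ⟨3 * n, by omega, by omega⟩) _, ?_⟩
  intro h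
  -- Position `2` is a breakpoint of the first macrorun only.
  have h₂ : (breakpointRun (fun n => n % 2 = 0) 2).2.2.1 =
      (breakpointRun (fun n => n % 3 = 0) 2).2.2.1 := by rw [h]
  simp [breakpointRun] at h₂
  exact Set.empty_ne_univ h₂
end
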